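/- arXiv:gr-qc/9705085 — 3 statements merged into one kernel-verified Lean document; each statement's English description precedes it below -/
import Mathlib

section
/- Let λ : ℝ → ℝ be nonnegative on (0,∞), let f, g : ℝ → ℝ, let x₀ ∈ ℝ and let C ∈ (0,1]. Assume that for every k ∈ (0,1] there exists ε₀ > 0 such that for all ε with 0 < ε < ε₀ and all δ with |δ| ≤ ε one has |(f(x₀+δ) − f(x₀)) − (g(x₀+δ) − g(x₀))| ≤ k·λ(ε). Suppose (εₙ) is a sequence of positive reals tending to 0 such that λ(εₙ)/εₙ converges to a finite limit K, and (δₙ) is a sequence with C·εₙ ≤ |δₙ| ≤ εₙ for all n. Then the difference of first difference quotients ((f(x₀+δₙ) − f(x₀))/δₙ) − ((g(x₀+δₙ) − g(x₀))/δₙ) tends to 0 as n → ∞. In particular, if g is differentiable at x₀, then (f(x₀+δₙ) − f(x₀))/δₙ → g'(x₀). -/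
open Filter Topology

/-!
Refinability by every factor `k ∈ (0, 1]` turns the error bound `O(λ(ε))` on the difference of
increments into `o(λ(ε))`. Along directions with `λ(ε) = O(ε)` and `ε = O(δ)` this gives `o(δ)`,
so the difference of the difference quotients vanishes in the limit.
-/

open Asymptotics

/-- The increments of `f` and `g` at `x₀` cannot be told apart in `ε`-small regions by measurements
with error function `lam`, even after refining the measurements by a factor `k ∈ (0, 1]`. -/
def RefinablyClose {E F : Type*} [SeminormedAddCommGroup E] [SeminormedAddCommGroup F]
    (lam : ℝ → ℝ) (f g : E → F) (x₀ : E) : Prop :=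
  ∀ k : ℝ, 0 < k → k ≤ 1 → ∃ ε₀ > 0, ∀ ε : ℝ, 0 < ε → ε < ε₀ → ∀ δ : E, ‖δ‖ ≤ ε →
    ‖(f (x₀ + δ) - f x₀) - (g (x₀ + δ) - g x₀)‖ ≤ k * lam ε

theorem isLittleO_of_forall_le_one {α F G : Type*} [Norm F] [SeminormedAddCommGroup G]
    {l : Filter α} {u : α → F} {v : α → G}
    (h : ∀ k : ℝ, 0 < k → k ≤ 1 → ∀ᶠ i in l, ‖u i‖ ≤ k * ‖v i‖) : u =o[l] v := by
  refine isLittleO_iff.2 fun c hc => ?_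
  filter_upwards [h (min c 1) (lt_min hc one_pos) (min_le_right c 1)] with i hi
  calc ‖u i‖ ≤ min c 1 * ‖v i‖ := hi
    _ ≤ c * ‖v i‖ := by gcongr; exact min_le_left c 1

theorem RefinablyClose.isLittleO {α E F : Type*} [SeminormedAddCommGroup E]
    [SeminormedAddCommGroup F] {lam : ℝ → ℝ} {f g : E → F} {x₀ : E}
    (h : RefinablyClose lam f g x₀) {l : Filter α} {ε : α → ℝ} (hε : Tendsto ε l (𝓝[>] 0))
    {δ : α → E} (hδ : ∀ᶠ i in l, ‖δ i‖ ≤ ε i) :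
    (fun i => (f (x₀ + δ i) - f x₀) - (g (x₀ + δ i) - g x₀)) =o[l] fun i => lam (ε i) := by
  refine isLittleO_of_forall_le_one fun k hk hk1 => ?_
  obtain ⟨ε₀, hε₀, hclose⟩ := h k hk hk1
  filter_upwards [hε.eventually (Ioo_mem_nhdsGT hε₀), hδ] with i hi hδi
  calc _ ≤ k * lam (ε i) := hclose (ε i) hi.1 hi.2 (δ i) hδi
    _ ≤ k * ‖lam (ε i)‖ := by gcongr; exact Real.le_norm_self _

theorem tendsto_nhdsNE_zero_of_norm_le_of_isBigO {α E : Type*} [NormedAddCommGroup E]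
    {l : Filter α} {ε : α → ℝ} (hε : Tendsto ε l (𝓝[>] 0)) {δ : α → E}
    (hδ : ∀ᶠ i in l, ‖δ i‖ ≤ ε i) (hεδ : ε =O[l] δ) : Tendsto δ l (𝓝[≠] 0) := by
  obtain ⟨hε0, hεpos⟩ := tendsto_nhdsWithin_iff.1 hε
  refine tendsto_nhdsWithin_iff.2 ⟨squeeze_zero_norm' hδ hε0, ?_⟩
  filter_upwards [hεpos, hεδ.eq_zero_imp] with i hi himp hδi
  exact (Set.mem_Ioi.1 hi).ne' (himp hδi)

theorem isBigO_of_mul_le_norm {α E : Type*} [SeminormedAddCommGroup E] {l : Filter α} {u : α → ℝ}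
    {v : α → E} {C : ℝ} (hC : 0 < C) (hu : ∀ᶠ i in l, 0 ≤ u i)
    (h : ∀ᶠ i in l, C * u i ≤ ‖v i‖) : u =O[l] v := by
  refine isBigO_iff''.2 ⟨C, hC, ?_⟩
  filter_upwards [hu, h] with i hui hi
  rwa [Real.norm_of_nonneg hui]

theorem stmt0_general {α 𝕜 F : Type*} [NontriviallyNormedField 𝕜] [NormedAddCommGroup F]
    [NormedSpace 𝕜 F] {lam : ℝ → ℝ} {f g : 𝕜 → F} {x₀ : 𝕜} (h : RefinablyClose lam f g x₀)
    {l : Filter α} {ε : α → ℝ} (hε : Tendsto ε l (𝓝[>] 0))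
    (hlam : (fun i => lam (ε i)) =O[l] ε)
    {δ : α → 𝕜} (hδ : ∀ᶠ i in l, ‖δ i‖ ≤ ε i) (hεδ : ε =O[l] δ) :
    Tendsto (fun i =>
        (δ i)⁻¹ • (f (x₀ + δ i) - f x₀) - (δ i)⁻¹ • (g (x₀ + δ i) - g x₀))
      l (𝓝 0) ∧
    (DifferentiableAt 𝕜 g x₀ →
      Tendsto (fun i => (δ i)⁻¹ • (f (x₀ + δ i) - f x₀)) l (𝓝 (deriv g x₀))) := by
  have hdiff : Tendsto (fun i =>
      (δ i)⁻¹ • (f (x₀ + δ i) - f x₀) - (δ i)⁻¹ • (g (x₀ + δ i) - g x₀)) l (𝓝 0) := by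
    simpa only [smul_sub] using
      (((h.isLittleO hε hδ).trans_isBigO hlam).trans_isBigO hεδ).tendsto_inv_smul_nhds_zero
  refine ⟨hdiff, fun hg => ?_⟩
  have hquot : Tendsto (fun i => (δ i)⁻¹ • (g (x₀ + δ i) - g x₀)) l (𝓝 (deriv g x₀)) :=
    hg.hasDerivAt.tendsto_slope_zero.comp (tendsto_nhdsNE_zero_of_norm_le_of_isBigO hε hδ hεδ)
  simpa only [sub_add_cancel, zero_add] using hdiff.add hquot

/-- Analytic core of Lemma 1: if measurements may be refined by any factor `k ∈ (0,1]`
and `λ(εₙ)/εₙ → K < ∞` along some sequence `εₙ → 0⁺`, then the first difference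
quotients of `f` and `g` at `x₀` agree in the limit; in particular if `g` is
differentiable at `x₀`, the difference quotients of `f` converge to `g' x₀`. -/
theorem stmt0 (lam : ℝ → ℝ) (hlam : ∀ ε > 0, 0 ≤ lam ε)
    (f g : ℝ → ℝ) (x₀ : ℝ) (C : ℝ) (hC : 0 < C ∧ C ≤ 1)
    (hclose : ∀ k : ℝ, 0 < k → k ≤ 1 → ∃ ε₀ > 0, ∀ ε : ℝ, 0 < ε → ε < ε₀ →
      ∀ δ : ℝ, |δ| ≤ ε →
        |(f (x₀ + δ) - f x₀) - (g (x₀ + δ) - g x₀)| ≤ k * lam ε)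
    (ε : ℕ → ℝ) (hεpos : ∀ n, 0 < ε n) (hε0 : Tendsto ε atTop (𝓝 0))
    (K : ℝ) (hK : Tendsto (fun n => lam (ε n) / ε n) atTop (𝓝 K))
    (δ : ℕ → ℝ) (hδ : ∀ n, C * ε n ≤ |δ n| ∧ |δ n| ≤ ε n) :
    Tendsto (fun n =>
        (f (x₀ + δ n) - f x₀) / δ n - (g (x₀ + δ n) - g x₀) / δ n)
      atTop (𝓝 0) ∧
    (DifferentiableAt ℝ g x₀ →
      Tendsto (fun n => (f (x₀ + δ n) - f x₀) / δ n) atTop (𝓝 (deriv g x₀))) := by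
  obtain ⟨hδ_lower, hδ_upper⟩ := forall_and.1 hδ
  simpa only [smul_eq_mul, inv_mul_eq_div] using stmt0_general
    (show RefinablyClose lam f g x₀ from hclose) (tendsto_nhdsWithin_iff.2 ⟨hε0, .of_forall hεpos⟩)
    (isBigO_of_div_tendsto_nhds (.of_forall fun n hn => absurd hn (hεpos n).ne') K hK)
    (.of_forall hδ_upper)
    (isBigO_of_mul_le_norm hC.1 (.of_forall fun n => (hεpos n).le) (.of_forall hδ_lower))
end

section
/- Let p ≥ 1 be a natural number, let λ : ℝ → ℝ be nonnegative on (0,∞), let f, g : ℝ → ℝ, let x₀ ∈ ℝ and let C ∈ (0, 1/p]. Assume that for every k ∈ (0,1] there exists ε₀ > 0 such that for all ε with 0 < ε < ε₀ and all δ with |δ| ≤ ε one has |(f(x₀+δ) − f(x₀)) − (g(x₀+δ) − g(x₀))| ≤ k·λ(ε). Suppose (εₙ) is a sequence of positive reals tending to 0 such that λ(εₙ)/εₙ^p converges to a finite limit K, and (δₙ) is a sequence with C·εₙ ≤ |δₙ| ≤ εₙ/p for all n. Denote by Δ^p_δ h(x₀) = Σ_{j=0}^{p} (−1)^{p−j}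 (p choose j) h(x₀ + j·δ) the p-th forward difference of a function h. Then (Δ^p_{δₙ} f(x₀) − Δ^p_{δₙ} g(x₀))/δₙ^p tends to 0 as n → ∞. -/
/- Applied to `w(y) = (f(y) − f(x₀)) − (g(y) − g(x₀))`, the `p`-th forward difference gives
`Δ^p f − Δ^p g` at `x₀`, because `p ≥ 1` kills constants, and it samples `w` only within distance
`p‖δ‖ ≤ ε` of `x₀`. It is therefore at most `2^p` times the measurement error `k λ(ε)`. As `k` is
arbitrary, `Δ^p f − Δ^p g = o(λ(ε))`, while `λ(ε) = O(ε^p)` and `ε = O(‖δ‖)`. -/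

open Filter Topology

section

open Asymptotics Function

section ForwardDifference

variable {M G : Type*} [AddCommMonoid M]

lemma fwdDiff_iter_sub [AddCommGroup G] (δ : M) (f g : M → G) (p : ℕ) :
    (fwdDiff δ)^[p] (f - g) = (fwdDiff δ)^[p] f - (fwdDiff δ)^[p] g := by
  simpa only [fwdDiff_aux.coe_fwdDiffₗ_pow] using map_sub (fwdDiff_aux.fwdDiffₗ M G δ ^ p) f g

lemma fwdDiff_iter_sub_const [AddCommGroup G] {p : ℕ} (hp : p ≠ 0) (δ : M) (f : M → G) (c : G) :
    (fwdDiff δ)^[p] (fun y ↦ f y - c) = (fwdDiff δ)^[p] f := by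
  obtain ⟨q, rfl⟩ := Nat.exists_eq_succ_of_ne_zero hp
  have hstep : fwdDiff δ (fun y ↦ f y - c) = fwdDiff δ f :=
    funext fun _ ↦ sub_sub_sub_cancel_right ..
  rw [iterate_succ_apply, hstep, ← iterate_succ_apply]

lemma fwdDiff_iter_eq_sum_mul {S R : Type*} [Semiring S] [Ring R] (p : ℕ) (δ : S) (f : S → R)
    (x : S) :
    (fwdDiff δ)^[p] f x =
      ∑ j ∈ Finset.range (p + 1), (-1 : R) ^ (p - j) * (p.choose j : R) * f (x + (j : S) * δ) := by
  simp only [fwdDiff_iter_eq_sum_shift, zsmul_eq_mul, nsmul_eq_mul, Int.cast_mul, Int.cast_pow,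
    Int.cast_neg, Int.cast_one, Int.cast_natCast]

variable [SeminormedAddCommGroup G]

lemma norm_fwdDiff_iter_le {p : ℕ} {δ x : M} {f : M → G} {B : ℝ}
    (hf : ∀ j ≤ p, ‖f (x + j • δ)‖ ≤ B) : ‖(fwdDiff δ)^[p] f x‖ ≤ 2 ^ p * B := by
  induction p generalizing x with
  | zero => simpa using hf 0 le_rfl
  | succ p ih =>
    have hshift : ∀ j ≤ p, ‖f (x + δ + j • δ)‖ ≤ B := fun j hj ↦ by
      simpa only [add_assoc, succ_nsmul'] using hf (j + 1) (Nat.succ_le_succ hj)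
    rw [iterate_succ_apply']
    calc ‖(fwdDiff δ)^[p] f (x + δ) - (fwdDiff δ)^[p] f x‖
        ≤ ‖(fwdDiff δ)^[p] f (x + δ)‖ + ‖(fwdDiff δ)^[p] f x‖ := norm_sub_le _ _
      _ ≤ 2 ^ p * B + 2 ^ p * B := add_le_add (ih hshift) (ih fun j hj ↦ hf j (hj.trans p.le_succ))
      _ = 2 ^ (p + 1) * B := by ring

lemma norm_fwdDiff_iter_sub_le {p : ℕ} (hp : p ≠ 0) {δ x : M} {f g : M → G} {B : ℝ}
    (hfg : ∀ j ≤ p, ‖(f (x + j • δ) - f x) - (g (x + j • δ) - g x)‖ ≤ B) :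
    ‖(fwdDiff δ)^[p] f x - (fwdDiff δ)^[p] g x‖ ≤ 2 ^ p * B := by
  rw [← fwdDiff_iter_sub_const hp δ f (f x), ← fwdDiff_iter_sub_const hp δ g (g x),
    ← Pi.sub_apply, ← fwdDiff_iter_sub]
  exact norm_fwdDiff_iter_le hfg

end ForwardDifference

section RefinableError

variable {ι E F : Type*} [SeminormedAddCommGroup E] [SeminormedAddCommGroup F]

/-- The increments of `f` and `g` from `x` are indistinguishable by refinable measurements with
error function `lam`: for each refinement factor `k ∈ (0, 1]`, they differ by at most `k * lam ε`
throughout every sufficiently small ball of radius `ε` around `x`. -/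
def AgreesUpToRefinableError (lam : ℝ → ℝ) (f g : E → F) (x : E) : Prop :=
  ∀ k : ℝ, 0 < k → k ≤ 1 → ∃ ε₀ > 0, ∀ ε : ℝ, 0 < ε → ε < ε₀ →
    ∀ δ : E, ‖δ‖ ≤ ε → ‖(f (x + δ) - f x) - (g (x + δ) - g x)‖ ≤ k * lam ε

variable {l : Filter ι} {lam : ℝ → ℝ} {f g : E → F} {x₀ : E} {ε : ι → ℝ} {δ : ι → E} {p : ℕ}

lemma AgreesUpToRefinableError.eventually_norm_le (hfg : AgreesUpToRefinableError lam f g x₀)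
    (hε : Tendsto ε l (𝓝[>] 0)) {c : ℝ} (hc : 0 < c) :
    ∀ᶠ n in l, ∀ v : E, ‖v‖ ≤ ε n →
      ‖(f (x₀ + v) - f x₀) - (g (x₀ + v) - g x₀)‖ ≤ c * ‖lam (ε n)‖ := by
  obtain ⟨ε₀, hε₀, hclose⟩ := hfg (min 1 c) (lt_min one_pos hc) (min_le_left 1 c)
  filter_upwards [hε.eventually (Ioo_mem_nhdsGT hε₀)] with n hn v hv
  calc ‖(f (x₀ + v) - f x₀) - (g (x₀ + v) - g x₀)‖
      ≤ min 1 c * lam (ε n) := hclose (ε n) hn.1 hn.2 v hv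
    _ ≤ min 1 c * ‖lam (ε n)‖ := by gcongr; exact Real.le_norm_self _
    _ ≤ c * ‖lam (ε n)‖ := by gcongr; exact min_le_right 1 c

lemma AgreesUpToRefinableError.isLittleO_fwdDiff_iter_sub
    (hfg : AgreesUpToRefinableError lam f g x₀) (hp : p ≠ 0) (hε : Tendsto ε l (𝓝[>] 0))
    (hδ : ∀ᶠ n in l, p * ‖δ n‖ ≤ ε n) :
    (fun n ↦ (fwdDiff (δ n))^[p] f x₀ - (fwdDiff (δ n))^[p] g x₀) =o[l] fun n ↦ lam (ε n) := by
  refine .of_bound fun c hc ↦ ?_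
  have hc' : 0 < c / 2 ^ p := by positivity
  filter_upwards [hfg.eventually_norm_le hε hc', hδ] with n hclose hδn
  have hball : ∀ j ≤ p, ‖j • δ n‖ ≤ ε n := fun j hj ↦
    calc ‖j • δ n‖ ≤ j * ‖δ n‖ := norm_nsmul_le
      _ ≤ p * ‖δ n‖ := by gcongr
      _ ≤ ε n := hδn
  calc ‖(fwdDiff (δ n))^[p] f x₀ - (fwdDiff (δ n))^[p] g x₀‖
      ≤ 2 ^ p * (c / 2 ^ p * ‖lam (ε n)‖) :=
        norm_fwdDiff_iter_sub_le hp fun j hj ↦ hclose _ (hball j hj)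
    _ = c * ‖lam (ε n)‖ := by field_simp

theorem stmt2_general (hp : p ≠ 0) (hfg : AgreesUpToRefinableError lam f g x₀)
    (hε : Tendsto ε l (𝓝[>] 0)) (hlam : (fun n ↦ lam (ε n)) =O[l] fun n ↦ ε n ^ p)
    {C : ℝ} (hC : 0 < C) (hδ : ∀ᶠ n in l, C * ε n ≤ ‖δ n‖ ∧ ‖δ n‖ ≤ ε n / p) :
    (fun n ↦ (fwdDiff (δ n))^[p] f x₀ - (fwdDiff (δ n))^[p] g x₀) =o[l] fun n ↦ ‖δ n‖ ^ p := by
  have hδε : ∀ᶠ n in l, p * ‖δ n‖ ≤ ε n :=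
    hδ.mono fun n hn ↦ (le_div_iff₀' (by positivity)).1 hn.2
  have hεδ : ε =O[l] δ := by
    refine .of_bound C⁻¹ ?_
    filter_upwards [hε.eventually self_mem_nhdsWithin, hδ] with n hn hδn
    rw [Real.norm_of_nonneg (Set.mem_Ioi.1 hn).le, le_inv_mul_iff₀ hC]
    exact hδn.1
  calc (fun n ↦ (fwdDiff (δ n))^[p] f x₀ - (fwdDiff (δ n))^[p] g x₀)
      =o[l] fun n ↦ lam (ε n) := hfg.isLittleO_fwdDiff_iter_sub hp hε hδε
    _ =O[l] fun n ↦ ε n ^ p := hlam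
    _ =O[l] fun n ↦ ‖δ n‖ ^ p := hεδ.norm_right.pow p

end RefinableError

end

/-- Common generalization of Lemmas 1, 3 and 5: under refinable measurement errors
with `λ(εₙ)/εₙ^p → K < ∞` along a sequence `εₙ → 0⁺`, the `p`-th forward difference
quotients of `f` and `g` at `x₀` agree in the limit. Here
`Δ^p_δ h(x₀) = ∑_{j=0}^{p} (−1)^{p−j} (p choose j) h(x₀ + jδ)`. -/
theorem stmt2 (p : ℕ) (hp : 1 ≤ p) (lam : ℝ → ℝ) (hlam : ∀ ε > 0, 0 ≤ lam ε)
    (f g : ℝ → ℝ) (x₀ : ℝ) (C : ℝ) (hC : 0 < C ∧ C ≤ 1 / p)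
    (hclose : ∀ k : ℝ, 0 < k → k ≤ 1 → ∃ ε₀ > 0, ∀ ε : ℝ, 0 < ε → ε < ε₀ →
      ∀ δ : ℝ, |δ| ≤ ε →
        |(f (x₀ + δ) - f x₀) - (g (x₀ + δ) - g x₀)| ≤ k * lam ε)
    (ε : ℕ → ℝ) (hεpos : ∀ n, 0 < ε n) (hε0 : Tendsto ε atTop (𝓝 0))
    (K : ℝ) (hK : Tendsto (fun n => lam (ε n) / (ε n) ^ p) atTop (𝓝 K))
    (δ : ℕ → ℝ) (hδ : ∀ n, C * ε n ≤ |δ n| ∧ |δ n| ≤ ε n / p) :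
    Tendsto (fun n =>
        ((∑ j ∈ Finset.range (p + 1),
            (-1 : ℝ) ^ (p - j) * (p.choose j : ℝ) * f (x₀ + (j : ℝ) * δ n)) -
         (∑ j ∈ Finset.range (p + 1),
            (-1 : ℝ) ^ (p - j) * (p.choose j : ℝ) * g (x₀ + (j : ℝ) * δ n))) / (δ n) ^ p)
      atTop (𝓝 0) := by
  have hfg : AgreesUpToRefinableError lam f g x₀ := hclose
  have hlamO : (fun n ↦ lam (ε n)) =O[atTop] fun n ↦ ε n ^ p :=
    Asymptotics.isBigO_of_div_tendsto_nhds
      (.of_forall fun n hn ↦ absurd hn (pow_pos (hεpos n) p).ne') K hK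
  have hdiff := stmt2_general (Nat.one_le_iff_ne_zero.1 hp) hfg
    (tendsto_nhdsWithin_iff.2 ⟨hε0, .of_forall hεpos⟩) hlamO hC.1 (.of_forall hδ)
  simp only [← norm_pow, fwdDiff_iter_eq_sum_mul] at hdiff
  exact hdiff.of_norm_right.tendsto_div_nhds_zero
end

section
/- Let p ≥ 1 be a natural number and let λ : ℝ → ℝ satisfy liminf_{ε→0⁺} λ(ε)/ε^p = +∞ (liminf taken along ε → 0 within (0,∞)). Let x₀ ∈ ℝ, r > 0, M ≥ 0, and let f, g : ℝ → ℝ be p times differentiable on [x₀ − r, x₀ + r] with the p-th derivatives bounded in absolute value by M there. Assume that the j-th derivatives of f and g agree at x₀ for all 0 ≤ j ≤ p − 1 (the 0-th derivative being the function value). Then for every k ∈ (0,1] there exists ε₀ > 0 such that for all ε with 0 < ε < ε₀ and all δ with |δ| ≤ ε one has |f(x₀+δ) − g(x₀+δ)| ≤ k·λ(ε). -/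
open Filter Topology

/-!
The difference `H = F 0 - G 0` has vanishing derivatives of order `< p` at `x₀` and a `p`-th
derivative bounded by `M`. Integrating this bound `p` times along the segment from `x₀` to `x`
gives Taylor's estimate `‖H x‖ ≤ M / p! * ‖x - x₀‖ ^ p`, without any continuity of the `p`-th
derivative. Since `λ(ε) / ε ^ p` eventually exceeds the constant `M / p! / k`, the error on the
`ε`-ball is eventually at most `k * λ(ε)`.
-/

section Taylor

variable {𝕜 E : Type*} [RCLike 𝕜] [NormedAddCommGroup E] [NormedSpace 𝕜 E] {s : Set 𝕜} {x₀ : 𝕜}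

theorem norm_image_sub_le_pow_succ_of_norm_hasDerivWithin_le_pow (hs : StarConvex ℝ x₀ s)
    {f f' : 𝕜 → E} {C : ℝ} {n : ℕ} (hf : ∀ x ∈ s, HasDerivWithinAt f (f' x) s x)
    (bound : ∀ x ∈ s, ‖f' x‖ ≤ C * ‖x - x₀‖ ^ n) {x : 𝕜} (hx : x ∈ s) :
    ‖f x - f x₀‖ ≤ C / (n + 1) * ‖x - x₀‖ ^ (n + 1) := by
  let : NormedSpace ℝ E := NormedSpace.restrictScalars ℝ 𝕜 E
  let γ : ℝ → 𝕜 := AffineMap.lineMap x₀ x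
  have hγs : Set.MapsTo γ (Set.Icc 0 1) s := fun t ht ↦
    hs.segment_subset hx (segment_eq_image_lineMap ℝ x₀ x ▸ Set.mem_image_of_mem _ ht)
  have hγ_norm (t : ℝ) (ht : 0 ≤ t) : ‖γ t - x₀‖ = t * ‖x - x₀‖ := by
    simp [γ, AffineMap.lineMap_apply, norm_smul, abs_of_nonneg ht]
  have hderiv (t : ℝ) (ht : t ∈ Set.Icc (0 : ℝ) 1) :
      HasDerivWithinAt (fun t ↦ f (γ t) - f x₀) ((x - x₀) • f' (γ t)) (Set.Icc 0 1) t :=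
    ((hf _ (hγs ht)).scomp t AffineMap.hasDerivWithinAt_lineMap hγs).sub_const _
  have hmajorant (t : ℝ) : HasDerivAt (fun t ↦ C / (n + 1) * ‖x - x₀‖ ^ (n + 1) * t ^ (n + 1))
      (C * ‖x - x₀‖ ^ (n + 1) * t ^ n) t := by
    refine ((hasDerivAt_pow (n + 1) t).const_mul _).congr_deriv ?_
    push_cast
    field_simp
  have hderiv_le (t : ℝ) (ht : t ∈ Set.Ico (0 : ℝ) 1) :
      ‖(x - x₀) • f' (γ t)‖ ≤ C * ‖x - x₀‖ ^ (n + 1) * t ^ n :=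
    calc ‖(x - x₀) • f' (γ t)‖ = ‖x - x₀‖ * ‖f' (γ t)‖ := norm_smul _ _
      _ ≤ ‖x - x₀‖ * (C * ‖γ t - x₀‖ ^ n) := by
        gcongr
        exact bound _ (hγs (Set.Ico_subset_Icc_self ht))
      _ = C * ‖x - x₀‖ ^ (n + 1) * t ^ n := by rw [hγ_norm t ht.1]; ring
  have h_one := image_norm_le_of_norm_deriv_right_le_deriv_boundary
    (fun t ht ↦ (hderiv t ht).continuousWithinAt)
    (fun t ht ↦ (hderiv t (Set.Ico_subset_Icc_self ht)).mono_of_mem_nhdsWithin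
      (Icc_mem_nhdsGE_of_mem ht))
    (by simp [γ]) hmajorant hderiv_le (Set.right_mem_Icc.2 zero_le_one)
  simpa [γ] using h_one

theorem norm_le_div_factorial_mul_pow_of_norm_hasDerivWithin_le (hs : StarConvex ℝ x₀ s)
    {M : ℝ} {p : ℕ} {F : ℕ → 𝕜 → E}
    (hF : ∀ j < p, ∀ x ∈ s, HasDerivWithinAt (F j) (F (j + 1) x) s x)
    (hF₀ : ∀ j < p, F j x₀ = 0) (bound : ∀ x ∈ s, ‖F p x‖ ≤ M) {x : 𝕜} (hx : x ∈ s) :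
    ‖F 0 x‖ ≤ M / p.factorial * ‖x - x₀‖ ^ p := by
  induction p generalizing F x with
  | zero => simpa using bound x hx
  | succ p ih =>
    have hF_one (y : 𝕜) (hy : y ∈ s) : ‖F 1 y‖ ≤ M / p.factorial * ‖y - x₀‖ ^ p :=
      ih (F := fun j ↦ F (j + 1)) (fun j hj ↦ hF (j + 1) (by lia))
        (fun j hj ↦ hF₀ (j + 1) (by lia)) bound hy
    calc ‖F 0 x‖ = ‖F 0 x - F 0 x₀‖ := by rw [hF₀ 0 p.succ_pos, sub_zero]
      _ ≤ M / p.factorial / (p + 1) * ‖x - x₀‖ ^ (p + 1) :=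
        norm_image_sub_le_pow_succ_of_norm_hasDerivWithin_le_pow hs (hF 0 p.succ_pos) hF_one hx
      _ = M / (p + 1).factorial * ‖x - x₀‖ ^ (p + 1) := by
        rw [div_div, Nat.factorial_succ]
        push_cast
        ring

end Taylor

theorem eventually_mul_le_of_liminf_div_eq_top {α : Type*} {l : Filter α} {u v : α → ℝ}
    (h : liminf (fun a ↦ ((u a / v a : ℝ) : EReal)) l = ⊤) (hv : ∀ᶠ a in l, 0 < v a) (C : ℝ) :
    ∀ᶠ a in l, C * v a ≤ u a := by
  have hC : ∀ᶠ a in l, (C : EReal) < ((u a / v a : ℝ) : EReal) :=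
    eventually_lt_of_lt_liminf (h ▸ EReal.coe_lt_top C)
  filter_upwards [hC, hv] with a hCa hva
  exact ((lt_div_iff₀ hva).1 (EReal.coe_lt_coe_iff.1 hCa)).le

theorem stmt6_general {𝕜 E : Type*} [RCLike 𝕜] [NormedAddCommGroup E] [NormedSpace 𝕜 E]
    {p : ℕ} {lam : ℝ → ℝ}
    (hlim : liminf (fun ε : ℝ ↦ ((lam ε / ε ^ p : ℝ) : EReal)) (𝓝[>] (0 : ℝ)) = ⊤)
    {x₀ : 𝕜} {r M : ℝ} (hr : 0 < r) {F G : ℕ → 𝕜 → E}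
    (hF : ∀ j < p, ∀ x ∈ Metric.closedBall x₀ r,
      HasDerivWithinAt (F j) (F (j + 1) x) (Metric.closedBall x₀ r) x)
    (hG : ∀ j < p, ∀ x ∈ Metric.closedBall x₀ r,
      HasDerivWithinAt (G j) (G (j + 1) x) (Metric.closedBall x₀ r) x)
    (bound : ∀ x ∈ Metric.closedBall x₀ r, ‖F p x - G p x‖ ≤ M)
    (hagree : ∀ j < p, F j x₀ = G j x₀) {k : ℝ} (hk : 0 < k) :
    ∃ ε₀ > 0, ∀ ε : ℝ, 0 < ε → ε < ε₀ →
      ∀ δ : 𝕜, ‖δ‖ ≤ ε → ‖F 0 (x₀ + δ) - G 0 (x₀ + δ)‖ ≤ k * lam ε := by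
  have hx₀ : x₀ ∈ Metric.closedBall x₀ r := Metric.mem_closedBall_self hr.le
  have hM : 0 ≤ M := (norm_nonneg _).trans (bound x₀ hx₀)
  have hTaylor (δ : 𝕜) (hδ : ‖δ‖ ≤ r) :
      ‖F 0 (x₀ + δ) - G 0 (x₀ + δ)‖ ≤ M / p.factorial * ‖δ‖ ^ p := by
    simpa using norm_le_div_factorial_mul_pow_of_norm_hasDerivWithin_le (F := F - G)
      ((convex_closedBall x₀ r).starConvex hx₀)
      (fun j hj x hx ↦ (hF j hj x hx).sub (hG j hj x hx))
      (fun j hj ↦ sub_eq_zero.2 (hagree j hj)) bound (x := x₀ + δ) (by simpa using hδ)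
  have hlam : ∀ᶠ ε in 𝓝[>] (0 : ℝ), M / p.factorial / k * ε ^ p ≤ lam ε :=
    eventually_mul_le_of_liminf_div_eq_top hlim
      (eventually_mem_nhdsWithin.mono fun _ hε ↦ pow_pos hε p) _
  obtain ⟨ε₀, hε₀, hsub⟩ :=
    mem_nhdsGT_iff_exists_Ioo_subset.1 (hlam.and (Ioo_mem_nhdsGT hr))
  refine ⟨ε₀, hε₀, fun ε hε hεε₀ δ hδ ↦ ?_⟩
  obtain ⟨hlamε, -, hεr⟩ := hsub ⟨hε, hεε₀⟩
  calc ‖F 0 (x₀ + δ) - G 0 (x₀ + δ)‖ ≤ M / p.factorial * ‖δ‖ ^ p := hTaylor δ (hδ.trans hεr.le)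
    _ ≤ M / p.factorial * ε ^ p := by gcongr
    _ = k * (M / p.factorial / k * ε ^ p) := by field_simp
    _ ≤ k * lam ε := by gcongr

/-- Common generalization of Lemmas 2, 4 and 6: if `liminf_{ε→0⁺} λ(ε)/ε^p = +∞`,
then functions `f, g` that are `p` times differentiable on `[x₀ − r, x₀ + r]`
(with iterated derivatives recorded in `F` and `G`, `F 0 = f`, `G 0 = g`),
whose `p`-th derivatives are bounded by `M` there and whose `j`-th derivatives agree
at `x₀` for all `j ≤ p − 1`, are indistinguishable on `ε`-balls up to error `k·λ(ε)`
for every refinement factor `k ∈ (0,1]`. -/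
theorem stmt6 (p : ℕ) (hp : 1 ≤ p) (lam : ℝ → ℝ)
    (hlim : Filter.liminf (fun ε : ℝ => ((lam ε / ε ^ p : ℝ) : EReal)) (𝓝[>] (0 : ℝ)) = ⊤)
    (x₀ r M : ℝ) (hr : 0 < r) (hM : 0 ≤ M)
    (f g : ℝ → ℝ) (F G : ℕ → ℝ → ℝ) (hF0 : F 0 = f) (hG0 : G 0 = g)
    (hFd : ∀ j < p, ∀ x ∈ Set.Icc (x₀ - r) (x₀ + r),
      HasDerivWithinAt (F j) (F (j + 1) x) (Set.Icc (x₀ - r) (x₀ + r)) x)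
    (hGd : ∀ j < p, ∀ x ∈ Set.Icc (x₀ - r) (x₀ + r),
      HasDerivWithinAt (G j) (G (j + 1) x) (Set.Icc (x₀ - r) (x₀ + r)) x)
    (hFM : ∀ x ∈ Set.Icc (x₀ - r) (x₀ + r), |F p x| ≤ M)
    (hGM : ∀ x ∈ Set.Icc (x₀ - r) (x₀ + r), |G p x| ≤ M)
    (hagree : ∀ j ≤ p - 1, F j x₀ = G j x₀) :
    ∀ k : ℝ, 0 < k → k ≤ 1 → ∃ ε₀ > 0, ∀ ε : ℝ, 0 < ε → ε < ε₀ →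
      ∀ δ : ℝ, |δ| ≤ ε → |f (x₀ + δ) - g (x₀ + δ)| ≤ k * lam ε := by
  subst hF0 hG0
  simp only [← Real.closedBall_eq_Icc] at hFd hGd hFM hGM
  exact fun k hk _ ↦ stmt6_general hlim hr hFd hGd
    (fun x hx ↦ norm_sub_le_of_le (hFM x hx) (hGM x hx)) (fun j hj ↦ hagree j (by lia)) hk
end
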